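/- Let (τ_m)_{m≥1} be a sequence of strictly positive real numbers and suppose ∑_{m≥1} τ_m^{−p} < ∞ for some p ∈ (0, 2]. Then ∑_{m≥1} τ_m² / m² = ∞. -/

import Mathlib

/-!
Since `τ_m ^ (-p) → 0`, all but finitely many `τ_m` are at least `1`, and for those
`τ_m ^ (-2) ≤ τ_m ^ (-p)` because `p ≤ 2`; hence `∑ τ_m ^ (-2) < ∞`. If `∑ τ_m² / m²` were finite
too, then `1 / m ≤ τ_m² / m² + τ_m ^ (-2)` (AM-GM applied termwise, which replaces Cauchy–Schwarz)
would make the harmonic series converge.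
-/

open Real

/-- Sequence-level core of the second part of Proposition A.2: if `(τ_m)_{m≥1}` is strictly
positive and `∑_{m≥1} τ_m ^ (−p) < ∞` for some `p ∈ (0, 2]`, then `∑_{m≥1} τ_m² / m² = ∞`. -/
theorem sum_sq_div_sq_eq_top
    (τ : ℕ → ℝ) (hτ : ∀ m : ℕ, 1 ≤ m → 0 < τ m)
    (p : ℝ) (hp : p ∈ Set.Ioc (0 : ℝ) 2)
    (hsum : Summable (fun m : {n : ℕ // 1 ≤ n} => (τ m) ^ (-p))) :
    ∑' m : {n : ℕ // 1 ≤ n}, ENNReal.ofReal ((τ m) ^ 2 / ((m : ℕ) : ℝ) ^ 2) = ⊤ := by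
  obtain ⟨hp0, hp2⟩ := hp
  by_contra hfin
  have hpos : ∀ m : {n : ℕ // 1 ≤ n}, 0 < τ m := fun m => hτ m m.2
  have hsq : Summable (fun m : {n : ℕ // 1 ≤ n} => (τ m) ^ 2 / ((m : ℕ) : ℝ) ^ 2) := by
    refine (ENNReal.summable_toReal hfin).congr fun m => ?_
    exact ENNReal.toReal_ofReal (by positivity)
  have hinv : Summable (fun m : {n : ℕ // 1 ≤ n} => (τ m) ^ (-2 : ℝ)) := by
    refine Summable.of_norm_bounded_eventually hsum ?_
    filter_upwards [hsum.tendsto_cofinite_zero.eventually_lt_const one_pos] with m hm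
    have h1 : 1 ≤ τ m := by
      by_contra! hlt
      exact absurd hm
        (not_lt.2 (Real.one_le_rpow_of_pos_of_le_one_of_nonpos (hpos m) hlt.le (by linarith)))
    rw [Real.norm_of_nonneg (Real.rpow_nonneg (hpos m).le _)]
    exact Real.rpow_le_rpow_of_exponent_le h1 (by linarith)
  have hharm : Summable (fun m : {n : ℕ // 1 ≤ n} => 1 / ((m : ℕ) : ℝ)) := by
    refine Summable.of_nonneg_of_le (fun m => by positivity) (fun m => ?_) (hsq.add hinv)
    have hm : (0 : ℝ) < ((m : ℕ) : ℝ) := by exact_mod_cast m.2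
    have ht := hpos m
    have hx : (τ m) ^ (-2 : ℝ) = ((τ m)⁻¹) ^ 2 := by
      rw [Real.rpow_neg ht.le, Real.rpow_two, inv_pow]
    have hprod : 1 / ((m : ℕ) : ℝ) = (τ m / ((m : ℕ) : ℝ)) * (τ m)⁻¹ := by
      field_simp
    rw [hx, hprod, ← div_pow]
    nlinarith [sq_nonneg (τ m / ((m : ℕ) : ℝ) - (τ m)⁻¹), sq_nonneg (τ m / ((m : ℕ) : ℝ)),
      sq_nonneg (τ m)⁻¹]
  refine Real.not_summable_one_div_natCast ?_
  have hind := (summable_subtype_iff_indicator (f := fun n : ℕ => 1 / (n : ℝ))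
    (s := {n : ℕ | 1 ≤ n})).1 hharm
  -- The excluded index `0` contributes `1 / 0 = 0`.
  refine hind.congr fun n => ?_
  rcases n with _ | n <;> simp [Set.indicator]
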